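/- Let n ≥ 2, θ > 0, and let X_1,…,X_n be i.i.d. Uniform[0,θ] random variables. Then τ_n = X̄_n / X_(n) has probability density function f_{τ_n}(t) = n · I_{n−1}(n·t − 1) for t ∈ [1/n, 1], where I_{n−1} denotes the probability density function of the sum of n−1 independent Uniform[0,1] random variables. -/

import Mathlib

open MeasureTheory ProbabilityTheory

/-- The uniform probability measure on `[0, θ]`. -/
noncomputable def uniformMeasure (θ : ℝ) : Measure ℝ :=
  ENNReal.ofReal θ⁻¹ • volume.restrict (Set.Icc 0 θ)

/-- The joint law of an i.i.d. sample of size `n` from `Uniform[0, θ]`. -/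
noncomputable def iidUniform (n : ℕ) (θ : ℝ) : Measure (Fin n → ℝ) :=
  Measure.pi fun _ => uniformMeasure θ

/-- Sample maximum. -/
noncomputable def sampleMax {n : ℕ} (x : Fin n → ℝ) : ℝ := ⨆ i, x i

/-- Empirical mean. -/
noncomputable def sampleMean {n : ℕ} (x : Fin n → ℝ) : ℝ := (∑ i, x i) / n

/-- The mean/max statistic `τ_n`. -/
noncomputable def tau {n : ℕ} (x : Fin n → ℝ) : ℝ := sampleMean x / sampleMax x

/-- The Irwin–Hall distribution with parameter `m`: the law of the sum of `m`
independent `Uniform[0,1]` random variables. -/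
noncomputable def irwinHall (m : ℕ) : Measure ℝ :=
  (iidUniform m 1).map fun u => ∑ i, u i

/-! Almost surely exactly one observation is the largest. Given that it is the `i`-th one and that
its value is `y`, the others are i.i.d. uniform on `[0, y]`, so that the sample is `y` times the
vector with `i`-th entry `1` and i.i.d. `Uniform[0,1]` entries elsewhere. Since `τ` is scale
invariant and symmetric, it equals `(1 + S) / n` with `S` of Irwin–Hall law, whatever `i` and `y`
are; hence `τ` has the law of `(1 + S) / n`, whose density is given by an affine change of
variables. -/

open Set
open scoped ENNReal

section Argmax

/-- The event that the `i`-th entry of a family is a largest one. Ties are allowed, so the events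
for different `i` may overlap. -/
def argmaxSet {ι α : Type*} [LE α] (i : ι) : Set (ι → α) := {x | ∀ j, x j ≤ x i}

theorem iUnion_argmaxSet {ι α : Type*} [Finite ι] [Nonempty ι] [LinearOrder α] :
    ⋃ i, argmaxSet i = (univ : Set (ι → α)) :=
  eq_univ_of_forall fun x => mem_iUnion.2 (Finite.exists_max x)

theorem insertNth_mem_argmaxSet {α : Type*} [Preorder α] {m : ℕ} {i : Fin (m + 1)} {y : α}
    {z : Fin m → α} :
    i.insertNth (α := fun _ => α) y z ∈ argmaxSet i ↔ ∀ j, z j ≤ y := by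
  simp [argmaxSet, Fin.forall_iff_succAbove i]

theorem measurable_insertNth {m : ℕ} {α : Fin (m + 1) → Type*} [∀ i, MeasurableSpace (α i)]
    (i : Fin (m + 1)) (y : α i) : Measurable (i.insertNth (α := α) y) :=
  (MeasurableEquiv.piFinSuccAbove α i).symm.measurable.comp measurable_prodMk_left

theorem pi_apply_eq_lintegral_insertNth {m : ℕ} {α : Fin (m + 1) → Type*}
    [∀ i, MeasurableSpace (α i)] (μ : ∀ i, Measure (α i)) [∀ i, SigmaFinite (μ i)]
    (i : Fin (m + 1)) {S : Set (∀ i, α i)} (hS : MeasurableSet S) :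
    Measure.pi μ S =
      ∫⁻ y, Measure.pi (fun j => μ (i.succAbove j)) (i.insertNth y ⁻¹' S) ∂μ i := by
  have he := (measurePreserving_piFinSuccAbove μ i).symm
  rw [← he.measure_preimage hS.nullMeasurableSet, Measure.prod_apply (he.measurable hS)]
  rfl

variable {α : Type*} [MeasurableSpace α] (μ : Measure α) [SigmaFinite μ]

theorem pi_setOf_eval_eq_eval [MeasurableEq α] [NullSingletonClass μ] {m : ℕ} {i k : Fin m}
    (hik : i ≠ k) : Measure.pi (fun _ => μ) {x | x i = x k} = 0 := by
  obtain _ | m := m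
  · exact i.elim0
  obtain ⟨l, rfl⟩ := Fin.exists_succAbove_eq hik
  rw [pi_apply_eq_lintegral_insertNth (fun _ => μ) k
    (measurableSet_eq_fun (measurable_pi_apply _) (measurable_pi_apply _))]
  simp [Measure.pi_hyperplane]

variable [LinearOrder α] [TopologicalSpace α] [OrderClosedTopology α] [SecondCountableTopology α]
  [OpensMeasurableSpace α]

theorem measurableSet_argmaxSet {ι : Type*} [Countable ι] (i : ι) :
    MeasurableSet (argmaxSet i : Set (ι → α)) := by
  simp only [argmaxSet, ofPred_forall]
  exact .iInter fun j => measurableSet_le (measurable_pi_apply j) (measurable_pi_apply i)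

theorem pi_eq_sum_restrict_argmaxSet [NullSingletonClass μ] (m : ℕ) :
    Measure.pi (fun _ : Fin (m + 1) => μ) =
      Measure.sum fun i => (Measure.pi fun _ => μ).restrict (argmaxSet i) := by
  have hdisj : Pairwise (Function.onFun (AEDisjoint (Measure.pi fun _ : Fin (m + 1) => μ))
      argmaxSet) := fun i k hik =>
    measure_mono_null (fun x hx => le_antisymm (hx.2 i) (hx.1 k)) (pi_setOf_eval_eq_eval μ hik)
  rw [← Measure.restrict_iUnion_ae hdisj
    fun i => (measurableSet_argmaxSet i).nullMeasurableSet, iUnion_argmaxSet, Measure.restrict_univ]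

theorem pi_restrict_argmaxSet_apply {m : ℕ} (i : Fin (m + 1)) {S : Set (Fin (m + 1) → α)}
    (hS : MeasurableSet S) :
    (Measure.pi fun _ => μ).restrict (argmaxSet i) S =
      ∫⁻ y, Measure.pi (fun _ : Fin m => μ.restrict (Iic y))
        (i.insertNth (α := fun _ => α) y ⁻¹' S) ∂μ := by
  rw [Measure.restrict_apply hS,
    pi_apply_eq_lintegral_insertNth (fun _ => μ) i (hS.inter (measurableSet_argmaxSet i))]
  refine lintegral_congr fun y => ?_
  have hbox : (i.insertNth (α := fun _ => α) y) ⁻¹' argmaxSet i = univ.pi fun _ => Iic y := by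
    ext z
    simp only [mem_preimage, insertNth_mem_argmaxSet, mem_univ_pi, mem_Iic]
  rw [preimage_inter, hbox, ← Measure.restrict_apply (measurable_insertNth i y hS),
    Measure.restrict_pi_pi]

end Argmax

section Uniform

instance isFiniteMeasure_uniformMeasure (θ : ℝ) : IsFiniteMeasure (uniformMeasure θ) :=
  Measure.smul_finite _ ENNReal.ofReal_ne_top

instance nullSingletonClass_uniformMeasure (θ : ℝ) : NullSingletonClass (uniformMeasure θ) :=
  ⟨fun y => by simp [uniformMeasure]⟩

theorem isProbabilityMeasure_uniformMeasure {θ : ℝ} (hθ : 0 < θ) :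
    IsProbabilityMeasure (uniformMeasure θ) := by
  constructor
  simp [uniformMeasure, ← ENNReal.ofReal_mul (inv_pos.2 hθ).le, hθ.ne']

instance isFiniteMeasure_iidUniform (n : ℕ) (θ : ℝ) : IsFiniteMeasure (iidUniform n θ) :=
  inferInstanceAs (IsFiniteMeasure (Measure.pi fun _ => uniformMeasure θ))

theorem isProbabilityMeasure_iidUniform (n : ℕ) {θ : ℝ} (hθ : 0 < θ) :
    IsProbabilityMeasure (iidUniform n θ) := by
  have := isProbabilityMeasure_uniformMeasure hθ
  unfold iidUniform
  infer_instance

theorem ae_uniformMeasure_mem_Ioc (θ : ℝ) : ∀ᵐ y ∂uniformMeasure θ, y ∈ Ioc 0 θ := by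
  refine Measure.ae_smul_measure ?_ _
  rw [← Measure.restrict_congr_set Ioc_ae_eq_Icc]
  exact ae_restrict_mem measurableSet_Ioc

theorem uniformMeasure_restrict_Iic {θ y : ℝ} (hy : y ∈ Ioc 0 θ) :
    (uniformMeasure θ).restrict (Iic y) = ENNReal.ofReal (y / θ) • uniformMeasure y := by
  have hscale : θ⁻¹ = y / θ * y⁻¹ := by field [hy.1.ne']
  have hinter : Iic y ∩ Icc 0 θ = Icc 0 y := by
    rw [← Ici_inter_Iic, inter_left_comm, Iic_inter_Iic, inf_eq_left.2 hy.2, Ici_inter_Iic]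
  rw [uniformMeasure, uniformMeasure, Measure.restrict_smul,
    Measure.restrict_restrict measurableSet_Iic, hinter, smul_smul,
    ← ENNReal.ofReal_mul (div_nonneg hy.1.le (hy.1.le.trans hy.2)), ← hscale]

theorem uniformMeasure_map_mul_left {c : ℝ} (hc : 0 < c) (θ : ℝ) :
    (uniformMeasure θ).map (c * ·) = uniformMeasure (c * θ) := by
  have hpre : Icc 0 θ = (c * ·) ⁻¹' Icc 0 (c * θ) := by
    simp [preimage_const_mul_Icc₀, hc, hc.ne']
  rw [uniformMeasure, uniformMeasure, Measure.map_smul, hpre,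
    ← Measure.restrict_map (measurable_const_mul c) measurableSet_Icc,
    Real.map_volume_mul_left hc.ne', Measure.restrict_smul, smul_smul, abs_of_pos (inv_pos.2 hc),
    mul_inv_rev, ENNReal.ofReal_mul' (inv_pos.2 hc).le]

theorem iidUniform_map_smul (m : ℕ) {c : ℝ} (hc : 0 < c) (θ : ℝ) :
    (iidUniform m θ).map (c • ·) = iidUniform m (c * θ) := by
  have hmap := uniformMeasure_map_mul_left hc θ
  have : SigmaFinite ((uniformMeasure θ).map (c * ·)) := by rw [hmap]; infer_instance
  simp only [iidUniform, ← hmap]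
  exact Measure.pi_map_pi fun _ => (measurable_const_mul c).aemeasurable

theorem pi_uniformMeasure_restrict_Iic (m : ℕ) {θ y : ℝ} (hy : y ∈ Ioc 0 θ) :
    Measure.pi (fun _ : Fin m => (uniformMeasure θ).restrict (Iic y)) =
      ENNReal.ofReal (y / θ) ^ m • (iidUniform m 1).map (y • ·) := by
  rw [iidUniform_map_smul m hy.1, mul_one]
  refine Measure.pi_eq fun s _ => ?_
  simp [uniformMeasure_restrict_Iic hy, iidUniform, Measure.pi_pi, Finset.prod_mul_distrib]

theorem ae_iidUniform_mem_Ioc (n : ℕ) (θ : ℝ) :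
    ∀ᵐ x ∂iidUniform n θ, ∀ i, x i ∈ Ioc 0 θ :=
  ae_all_iff.2 fun _ => Measure.tendsto_eval_ae_ae.eventually (ae_uniformMeasure_mem_Ioc θ)

/-- The law of an observation of an i.i.d. `Uniform[0,θ]` sample of size `m + 1` on the event that
it is the largest one, as an unnormalised measure: the factor `(y / θ) ^ m` is the probability that
the other `m` observations are at most `y`. -/
noncomputable def argmaxValueMeasure (m : ℕ) (θ : ℝ) : Measure ℝ :=
  (uniformMeasure θ).withDensity fun y => ENNReal.ofReal (y / θ) ^ m

theorem ae_argmaxValueMeasure_pos (m : ℕ) (θ : ℝ) : ∀ᵐ y ∂argmaxValueMeasure m θ, 0 < y :=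
  (withDensity_absolutelyContinuous _ _).ae_le <|
    (ae_uniformMeasure_mem_Ioc θ).mono fun _ hy => hy.1

instance sFinite_argmaxValueMeasure (m : ℕ) (θ : ℝ) : SFinite (argmaxValueMeasure m θ) :=
  inferInstanceAs (SFinite ((uniformMeasure θ).withDensity _))

/-- The sample with value `p.1` at the index `i` and values `p.1 * p.2 j` at the other ones. -/
def scaledInsertNth {m : ℕ} (i : Fin (m + 1)) (p : ℝ × (Fin m → ℝ)) : Fin (m + 1) → ℝ :=
  p.1 • i.insertNth (α := fun _ => ℝ) 1 p.2

theorem measurable_scaledInsertNth {m : ℕ} (i : Fin (m + 1)) : Measurable (scaledInsertNth i) :=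
  measurable_fst.smul ((measurable_insertNth i 1).comp measurable_snd)

theorem insertNth_smul_eq_scaledInsertNth {m : ℕ} (i : Fin (m + 1)) (y : ℝ) (u : Fin m → ℝ) :
    i.insertNth (α := fun _ => ℝ) y (y • u) = scaledInsertNth i (y, u) := by
  ext j
  induction j using i.succAboveCases <;> simp [scaledInsertNth]

theorem iidUniform_restrict_argmaxSet {m : ℕ} (θ : ℝ) (i : Fin (m + 1)) :
    (iidUniform (m + 1) θ).restrict (argmaxSet i) =
      ((argmaxValueMeasure m θ).prod (iidUniform m 1)).map (scaledInsertNth i) := by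
  ext S hS
  have hS' : MeasurableSet (scaledInsertNth i ⁻¹' S) := measurable_scaledInsertNth i hS
  rw [iidUniform, pi_restrict_argmaxSet_apply _ i hS,
    Measure.map_apply (measurable_scaledInsertNth i) hS, Measure.prod_apply hS', argmaxValueMeasure,
    lintegral_withDensity_eq_lintegral_mul _ (by fun_prop) (measurable_measure_prodMk_left hS')]
  refine lintegral_congr_ae ?_
  filter_upwards [ae_uniformMeasure_mem_Ioc θ] with y hy
  rw [pi_uniformMeasure_restrict_Iic m hy, Measure.smul_apply,
    Measure.map_apply (measurable_const_smul y) (measurable_insertNth i y hS)]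
  simp only [preimage, mem_ofPred_eq, insertNth_smul_eq_scaledInsertNth, smul_eq_mul, Pi.mul_apply]

end Uniform

section IrwinHall

theorem isProbabilityMeasure_irwinHall (m : ℕ) : IsProbabilityMeasure (irwinHall m) := by
  have := isProbabilityMeasure_iidUniform m one_pos
  exact Measure.isProbabilityMeasure_map (by fun_prop)

theorem ae_irwinHall_mem_Icc (m : ℕ) : ∀ᵐ s ∂irwinHall m, s ∈ Icc (0 : ℝ) m := by
  refine (ae_map_iff (by fun_prop) measurableSet_Icc).2 ?_
  filter_upwards [ae_iidUniform_mem_Ioc m 1] with u hu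
  refine ⟨Finset.sum_nonneg fun i _ => (hu i).1.le, ?_⟩
  simpa using Finset.sum_le_card_nsmul Finset.univ u 1 fun i _ => (hu i).2

theorem irwinHall_eq_withDensity_indicator {m : ℕ} {f : ℝ → ℝ≥0∞}
    (hf : irwinHall m = volume.withDensity f) :
    irwinHall m = volume.withDensity ((Icc (0 : ℝ) m).indicator f) := by
  rw [withDensity_indicator measurableSet_Icc, ← restrict_withDensity measurableSet_Icc, ← hf,
    Measure.restrict_eq_self_of_ae_mem (ae_irwinHall_mem_Icc m)]

end IrwinHall

section Tau

theorem measurable_tau {n : ℕ} : Measurable (tau : (Fin n → ℝ) → ℝ) := by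
  have hmax : Measurable (sampleMax : (Fin n → ℝ) → ℝ) := .iSup measurable_pi_apply
  unfold tau sampleMean
  fun_prop

theorem tau_smul {n : ℕ} {c : ℝ} (hc : 0 < c) (x : Fin n → ℝ) : tau (c • x) = tau x := by
  have hmax : sampleMax (c • x) = c * sampleMax x := (Real.mul_iSup_of_nonneg hc.le x).symm
  have hmean : sampleMean (c • x) = c * sampleMean x := by
    simp only [sampleMean, Pi.smul_apply, smul_eq_mul, ← Finset.mul_sum, mul_div_assoc]
  rw [tau, tau, hmax, hmean, mul_div_mul_left _ _ hc.ne']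

theorem sampleMax_eq_of_mem_argmaxSet {n : ℕ} {x : Fin n → ℝ} {i : Fin n} (hx : x ∈ argmaxSet i) :
    sampleMax x = x i :=
  have : Nonempty (Fin n) := ⟨i⟩
  le_antisymm (ciSup_le hx) (le_ciSup (finite_range x).bddAbove i)

theorem tau_insertNth_one {m : ℕ} (i : Fin (m + 1)) {u : Fin m → ℝ} (hu : ∀ j, u j ≤ 1) :
    tau (i.insertNth (α := fun _ => ℝ) 1 u) = (1 + ∑ j, u j) / (m + 1) := by
  rw [tau, sampleMax_eq_of_mem_argmaxSet (insertNth_mem_argmaxSet.2 hu), sampleMean,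
    Fin.sum_univ_succAbove _ i]
  simp

theorem map_tau_iidUniform_restrict_argmaxSet {m : ℕ} (θ : ℝ) (i : Fin (m + 1)) :
    ((iidUniform (m + 1) θ).restrict (argmaxSet i)).map tau =
      argmaxValueMeasure m θ univ • (irwinHall m).map fun s : ℝ => (1 + s) / (m + 1) := by
  have hsum : Measurable fun u : Fin m → ℝ => ∑ j, u j := by fun_prop
  have hshift : Measurable fun s : ℝ => (1 + s) / (m + 1) := by fun_prop
  have htau : tau ∘ scaledInsertNth i =ᵐ[(argmaxValueMeasure m θ).prod (iidUniform m 1)]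
      (fun u => (1 + ∑ j, u j) / (m + 1)) ∘ Prod.snd := by
    filter_upwards [Measure.quasiMeasurePreserving_fst.ae (ae_argmaxValueMeasure_pos m θ),
      Measure.quasiMeasurePreserving_snd.ae (ae_iidUniform_mem_Ioc m 1)] with p hy hu
    exact (tau_smul hy _).trans (tau_insertNth_one i fun j => (hu j).2)
  rw [iidUniform_restrict_argmaxSet, Measure.map_map measurable_tau (measurable_scaledInsertNth i),
    Measure.map_congr htau, ← Measure.map_map (by fun_prop) measurable_snd, Measure.map_snd_prod,
    Measure.map_smul, irwinHall, Measure.map_map hshift hsum]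
  rfl

theorem map_tau_iidUniform (m : ℕ) {θ : ℝ} (hθ : 0 < θ) :
    (iidUniform (m + 1) θ).map tau = (irwinHall m).map fun s : ℝ => (1 + s) / (m + 1) := by
  have := isProbabilityMeasure_iidUniform (m + 1) hθ
  have := isProbabilityMeasure_irwinHall m
  have := Measure.isProbabilityMeasure_map (μ := iidUniform (m + 1) θ) measurable_tau.aemeasurable
  have := Measure.isProbabilityMeasure_map (μ := irwinHall m)
    (f := fun s : ℝ => (1 + s) / (m + 1)) (by fun_prop)
  -- Both sides have total mass one, so the factor `c` need not be computed.
  obtain ⟨c, hc⟩ : ∃ c : ℝ≥0∞, (iidUniform (m + 1) θ).map tau =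
      c • (irwinHall m).map fun s : ℝ => (1 + s) / (m + 1) := by
    refine ⟨(m + 1 : ℕ) * argmaxValueMeasure m θ univ, ?_⟩
    rw [iidUniform, pi_eq_sum_restrict_argmaxSet, ← iidUniform,
      Measure.map_sum measurable_tau.aemeasurable, Measure.sum_fintype]
    simp only [map_tau_iidUniform_restrict_argmaxSet, Finset.sum_const,
      Finset.card_univ, Fintype.card_fin, ← Nat.cast_smul_eq_nsmul ℝ≥0∞, smul_smul]
  have hc_one : c = 1 := by simpa using (congrArg (· univ) hc).symm
  rw [hc, hc_one, one_smul]

end Tau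

section Density

theorem withDensity_map_measurableEquiv {α β : Type*} [MeasurableSpace α] [MeasurableSpace β]
    (μ : Measure α) (f : α → ℝ≥0∞) (e : α ≃ᵐ β) :
    (μ.withDensity f).map e = (μ.map e).withDensity (f ∘ e.symm) := by
  ext s hs
  rw [e.map_apply, withDensity_apply _ (e.measurable hs), withDensity_apply _ hs, e.restrict_map,
    lintegral_map_equiv]
  simp

theorem volume_map_add_div {a : ℝ} (ha : a ≠ 0) (b : ℝ) :
    (volume : Measure ℝ).map (fun s => (b + s) / a) = ENNReal.ofReal |a| • volume := by
  have hcomp : (fun s => (b + s) / a) = (· * a⁻¹) ∘ (b + ·) := by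
    ext s
    simp [div_eq_mul_inv]
  rw [hcomp, ← Measure.map_map (by fun_prop) (by fun_prop), map_add_left_eq_self,
    Real.map_volume_mul_right (inv_ne_zero ha), inv_inv]

theorem withDensity_map_add_div {a : ℝ} (ha : a ≠ 0) (b : ℝ) (f : ℝ → ℝ≥0∞) :
    (volume.withDensity f).map (fun s => (b + s) / a) =
      volume.withDensity fun t => ENNReal.ofReal |a| * f (a * t - b) := by
  let e : ℝ ≃ᵐ ℝ :=
    { toFun := fun s => (b + s) / a
      invFun := fun t => a * t - b
      left_inv := fun s => by field
      right_inv := fun t => by field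
      measurable_toFun := (measurable_const_add b).div_const a
      measurable_invFun := (measurable_const_mul a).sub_const b }
  calc (volume.withDensity f).map e
      = (volume.map e).withDensity (f ∘ e.symm) := withDensity_map_measurableEquiv _ _ _
    _ = (ENNReal.ofReal |a| • volume).withDensity fun t => f (a * t - b) :=
        congrArg (Measure.withDensity · _) (volume_map_add_div ha b)
    _ = volume.withDensity fun t => ENNReal.ofReal |a| * f (a * t - b) := by
        rw [withDensity_smul_measure, ← withDensity_smul' _ _ ENNReal.ofReal_ne_top]
        rfl

end Density

/-- Under an i.i.d. `Uniform[0,θ]` sample, `τ_n` has density `t ↦ n · I_{n-1}(n·t − 1)`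
on `[1/n, 1]`, where `I_{n-1}` is the Irwin–Hall density with parameter `n − 1`. -/
theorem tau_density_uniform
    (n : ℕ) (hn : 2 ≤ n) (θ : ℝ) (hθ : 0 < θ)
    (I : ℝ → ℝ)
    (hI : irwinHall (n - 1) = volume.withDensity fun s => ENNReal.ofReal (I s)) :
    (iidUniform n θ).map tau =
      volume.withDensity fun t =>
        ENNReal.ofReal
          (if t ∈ Set.Icc ((n : ℝ)⁻¹) 1 then (n : ℝ) * I ((n : ℝ) * t - 1) else 0) := by
  obtain ⟨m, rfl⟩ : ∃ m, n = m + 1 := ⟨n - 1, by lia⟩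
  rw [Nat.add_sub_cancel] at hI
  have hm : (0 : ℝ) < m + 1 := by positivity
  have hmem (t : ℝ) : (m + 1) * t - 1 ∈ Icc (0 : ℝ) m ↔ t ∈ Icc (m + 1 : ℝ)⁻¹ 1 := by
    simp only [mem_Icc, inv_le_iff_one_le_mul₀' hm]
    constructor <;> rintro ⟨h₀, h₁⟩ <;> constructor <;> nlinarith
  rw [map_tau_iidUniform m hθ, irwinHall_eq_withDensity_indicator hI,
    withDensity_map_add_div hm.ne']
  congr 1 with t
  by_cases ht : t ∈ Icc (m + 1 : ℝ)⁻¹ 1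
  · simp [indicator_of_mem ((hmem t).2 ht), ht, ENNReal.ofReal_mul hm.le, abs_of_pos hm]
  · simp [indicator_of_notMem (mt (hmem t).1 ht), ht]
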